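/- If two cubical 2-knots K₁² and K₂² in ℝ⁴ are equivalent by a finite sequence of cubulated moves (subdivision moves M1 and face boundary moves M2), then K₁² and K₂² are ambient isotopic in ℝ⁴. -/

import Mathlib

open scoped Classical

/-- A `k`-dimensional face of the cubulation of `ℝⁿ` at scale `1/m`:
free coordinates in `S`, the rest fixed at lattice values `v i / m`. -/
def sFace (n m : ℕ) (v : Fin n → ℤ) (S : Finset (Fin n)) : Set (Fin n → ℝ) :=
  {x | ∀ i, (i ∈ S → (v i : ℝ) / m ≤ x i ∧ x i ≤ ((v i : ℝ) + 1) / m) ∧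
        (i ∉ S → x i = (v i : ℝ) / m)}

/-- The collection of all `k`-faces of the cubulation of `ℝⁿ` at scale `1/m`. -/
def sFaces (n m k : ℕ) : Set (Set (Fin n → ℝ)) :=
  {F | ∃ (v : Fin n → ℤ) (S : Finset (Fin n)), S.card = k ∧ F = sFace n m v S}

/-- The `k`-skeleton of the cubulation of `ℝⁿ` at scale `1/m`. -/
def skeleton (n m k : ℕ) : Set (Fin n → ℝ) := ⋃₀ sFaces n m k


/-- The closed unit 2-disk. -/
def Disk2 : Set (EuclideanSpace ℝ (Fin 2)) := Metric.closedBall 0 1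

/-- The standard 2-sphere. -/
def Sphere2 : Set (EuclideanSpace ℝ (Fin 3)) := Metric.sphere 0 1

/-- A cubical 2-knot: an embedded 2-sphere contained in the 2-skeleton (scaffolding)
of some subdivision of the canonical cubulation of ℝ⁴. -/
def IsCubical2Knot (K : Set (Fin 4 → ℝ)) : Prop :=
  Nonempty (↥K ≃ₜ ↥Sphere2) ∧ ∃ m : ℕ, 0 < m ∧ K ⊆ skeleton 4 m 2

/-- Ambient isotopy in ℝ⁴: a continuous family of homeomorphisms of ℝ⁴ starting at the
identity and carrying `K₁` onto `K₂`. -/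
def AmbientIsotopic (K₁ K₂ : Set (Fin 4 → ℝ)) : Prop :=
  ∃ H : ℝ → ((Fin 4 → ℝ) ≃ₜ (Fin 4 → ℝ)),
    Continuous (fun q : ℝ × (Fin 4 → ℝ) => H q.1 q.2) ∧
    H 0 = Homeomorph.refl (Fin 4 → ℝ) ∧
    (H 1) '' K₁ = K₂

/-- A face boundary move (M2) at scale `1/m`, in the 3-cube `F` of the cubulation:
a connected disk `A = ⋃₀ 𝒜` of at most three squares of `∂F`, equal to `K ∩ F`,
is replaced by the complementary disk `B` in `∂F`. -/
def M2MoveAt (m : ℕ) (F : Set (Fin 4 → ℝ)) (K K' : Set (Fin 4 → ℝ)) : Prop :=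
  ∃ 𝒜 : Set (Set (Fin 4 → ℝ)),
    𝒜 ⊆ {G ∈ sFaces 4 m 2 | G ⊆ F} ∧ 𝒜.Nonempty ∧ 𝒜.ncard ≤ 3 ∧
    K ∩ F = ⋃₀ 𝒜 ∧
    Nonempty (↥(⋃₀ 𝒜) ≃ₜ ↥Disk2) ∧
    K' = (K \ ⋃₀ 𝒜) ∪ ⋃₀ ({G ∈ sFaces 4 m 2 | G ⊆ F} \ 𝒜)

/-- A face boundary move (M2) performed in some 3-cube of some subdivision (M1-moves
being subsumed by the choice of the subdivision scale `m`). -/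
def M2Move (K K' : Set (Fin 4 → ℝ)) : Prop :=
  ∃ m : ℕ, 0 < m ∧ ∃ F ∈ sFaces 4 m 3, M2MoveAt m F K K'

/-- Equivalence by a finite sequence of cubulated moves (M1 and M2). -/
def CubulatedEquiv (K₁ K₂ : Set (Fin 4 → ℝ)) : Prop :=
  Relation.ReflTransGen (fun K K' => M2Move K K' ∨ M2Move K' K) K₁ K₂

/-! A face move replaces a union of facets of a cube by the union of the remaining facets. Some
facet in the disk lies opposite to a facet outside it, since otherwise the disk, which has at most
three facets, would be a single opposite pair and hence disconnected. Shearing the cube along that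
axis makes it the region between two graphs, the disk being the lower one and the complementary disk
the upper one. We want to push the lower graph up along the fibres without moving the rest of the
knot. A knot is a surface, so by invariance of domain each open disc in the lower graph is open in
the knot; hence the rest of the knot accumulates on the cube only where the two graphs meet, and the
push, which moves nothing there, can be cut off away from the rest. -/

open Set Filter Topology Metric

section PlanarInvarianceOfDomain

theorem not_exists_continuousOn_log_circle :
    ¬ ∃ ℓ : ℂ → ℂ, ContinuousOn ℓ (sphere 0 1) ∧ ∀ z ∈ sphere (0 : ℂ) 1, Complex.exp (ℓ z) = z := by
  rintro ⟨ℓ, ℓ_cont, exp_ℓ⟩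
  have circle (θ : ℝ) : Complex.exp (θ * Complex.I) ∈ sphere (0 : ℂ) 1 := by
    simp [Complex.norm_exp_ofReal_mul_I]
  let M : ℝ → ℂ := fun θ ↦ ℓ (Complex.exp (θ * Complex.I)) - θ * Complex.I
  have M_cont : Continuous M :=
    (ℓ_cont.comp_continuous (by fun_prop) circle).sub (by fun_prop)
  have exp_M (θ : ℝ) : Complex.exp (M θ) = 1 := by
    rw [Complex.exp_sub, exp_ℓ _ (circle θ), div_self (Complex.exp_ne_zero _)]
  have M_turn : (M (2 * Real.pi)).im = (M 0).im - 2 * Real.pi := by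
    simp [M, Complex.exp_two_pi_mul_I]
  obtain ⟨θ, hθ⟩ : ∃ θ, (M θ).im = (M 0).im - Real.pi := by
    refine mem_range_of_exists_le_of_exists_ge (by fun_prop) ⟨2 * Real.pi, ?_⟩ ⟨0, ?_⟩ <;>
      linarith [Real.pi_pos]
  have exp_diff : Complex.exp (M θ - M 0) = 1 := by simp [Complex.exp_sub, exp_M]
  have := congrArg Complex.re exp_diff
  rw [Complex.exp_re, Complex.sub_im, hθ, sub_sub_cancel_left, Real.cos_neg, Real.cos_pi,
    Complex.one_re] at this
  linarith [Real.exp_pos (M θ - M 0).re]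

/-- The radial retraction of the plane onto the closed unit disc. -/
noncomputable def discRetraction (z : ℂ) : ℂ := (max 1 ‖z‖)⁻¹ • z

theorem continuous_discRetraction : Continuous discRetraction := by
  have (z : ℂ) : max 1 ‖z‖ ≠ 0 := (lt_max_of_lt_left one_pos).ne'
  unfold discRetraction
  fun_prop (disch := assumption)

theorem discRetraction_mem_closedBall (z : ℂ) : discRetraction z ∈ closedBall (0 : ℂ) 1 := by
  have : 0 < max 1 ‖z‖ := lt_max_of_lt_left one_pos
  rw [mem_closedBall_zero_iff, discRetraction, norm_smul, norm_inv, Real.norm_of_nonneg this.le,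
    inv_mul_le_one₀ this]
  exact le_max_right _ _

theorem discRetraction_of_mem_sphere {z : ℂ} (hz : z ∈ sphere (0 : ℂ) 1) :
    discRetraction z = z := by
  simp [discRetraction, mem_sphere_zero_iff_norm.1 hz]

theorem exists_zero_of_norm_sub_lt_one {h : ℂ → ℂ} (hc : ContinuousOn h (closedBall 0 1))
    (hb : ∀ z ∈ sphere (0 : ℂ) 1, ‖h z - z‖ < 1) : ∃ z ∈ closedBall (0 : ℂ) 1, h z = 0 := by
  by_contra! h_ne
  have h_retr_cont : Continuous (h ∘ discRetraction) :=
    hc.comp_continuous continuous_discRetraction discRetraction_mem_closedBall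
  have h_retr_ne (z : ℂ) : (h ∘ discRetraction) z ≠ 0 := h_ne _ (discRetraction_mem_closedBall z)
  obtain ⟨L, ⟨-, exp_L⟩, -⟩ := Complex.isCoveringMapOn_exp.existsUnique_continuousMap_lifts
    ⟨_, h_retr_cont⟩ (a₀ := 0) (Complex.exp_log (h_retr_ne 0)) h_retr_ne
  have div_mem_slitPlane (z : ℂ) (hz : z ∈ sphere (0 : ℂ) 1) : h z / z ∈ Complex.slitPlane := by
    have z_norm : ‖z‖ = 1 := mem_sphere_zero_iff_norm.1 hz
    have z_ne : z ≠ 0 := norm_ne_zero_iff.1 (by simp [z_norm])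
    have : h z / z = 1 + (h z - z) / z := by field_simp; ring
    rw [this]
    exact Complex.mem_slitPlane_of_norm_lt_one (by simpa [z_norm] using hb z hz)
  refine not_exists_continuousOn_log_circle ⟨fun z ↦ L z - Complex.log (h z / z), ?_, ?_⟩
  · refine L.continuous.continuousOn.sub (.clog (.div ?_ continuousOn_id ?_) div_mem_slitPlane)
    · exact hc.mono sphere_subset_closedBall
    · exact fun z hz ↦ norm_ne_zero_iff.1 (by simp [mem_sphere_zero_iff_norm.1 hz])
  · intro z hz
    have hz_ne : h z ≠ 0 := h_ne z (sphere_subset_closedBall hz)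
    have : Complex.exp (L z) = h z := by
      simpa [discRetraction_of_mem_sphere hz] using congrFun exp_L z
    rw [Complex.exp_sub, this, Complex.exp_log (Complex.slitPlane_ne_zero (div_mem_slitPlane z hz)),
      div_div_cancel₀ hz_ne]

theorem exists_continuous_near_ne_zero_on_sphere {G : ℂ → ℂ} (hG : Continuous G) {η : ℝ}
    (hη : 0 < η) (c : ℂ) (ε : ℝ) :
    ∃ P : ℂ → ℂ, Continuous P ∧ (∀ y, ‖P y - G y‖ < η) ∧ ∀ y ∈ sphere c ε, P y ≠ 0 := by
  obtain ⟨Q, Q_smooth, Q_near, -⟩ := Continuous.exists_contDiff_approx (ε := fun _ ↦ η / 2) 1 hG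
    continuous_const fun _ ↦ by positivity
  -- A smooth image of a one-dimensional circle misses values arbitrarily close to `0`.
  have missed_dense : Dense (range fun θ : ℝ ↦ Q (circleMap c ε θ))ᶜ :=
    (Q_smooth.comp (contDiff_circleMap c ε)).dense_compl_range_of_finrank_lt_finrank (by simp)
  obtain ⟨v, v_missed, v_small⟩ := missed_dense.exists_dist_lt 0 (half_pos hη)
  rw [dist_zero_left] at v_small
  refine ⟨fun y ↦ Q y - v, Q_smooth.continuous.sub continuous_const, fun y ↦ ?_, fun y hy h ↦ ?_⟩
  · have := Q_near y
    rw [dist_eq_norm] at this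
    calc ‖Q y - v - G y‖ = ‖(Q y - G y) - v‖ := by ring_nf
      _ ≤ ‖Q y - G y‖ + ‖v‖ := norm_sub_le _ _
      _ < η := by linarith
  · obtain ⟨θ, rfl⟩ : y ∈ range (circleMap c ε) := by
      rwa [range_circleMap, abs_of_nonneg (nonneg_of_mem_sphere hy)]
    exact v_missed ⟨θ, sub_eq_zero.1 h⟩

/-- The radial map pushing the punctured ball of radius `ε` around `c` onto its boundary sphere
and fixing everything outside; the value at `c` is the junk value `c`. -/
noncomputable def pushOutOfBall (c : ℂ) (ε : ℝ) (y : ℂ) : ℂ :=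
  c + max (ε / ‖y - c‖) 1 • (y - c)

theorem continuousOn_pushOutOfBall (c : ℂ) (ε : ℝ) : ContinuousOn (pushOutOfBall c ε) {c}ᶜ := by
  have (y : ℂ) (hy : y ∈ ({c}ᶜ : Set ℂ)) : ‖y - c‖ ≠ 0 := norm_ne_zero_iff.2 (sub_ne_zero.2 hy)
  unfold pushOutOfBall
  fun_prop (disch := assumption)

theorem pushOutOfBall_of_le {c y : ℂ} {ε : ℝ} (h : ε ≤ ‖y - c‖) : pushOutOfBall c ε y = y := by
  have : ε / ‖y - c‖ ≤ 1 := div_le_one_of_le₀ h (norm_nonneg _)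
  simp [pushOutOfBall, max_eq_right this]

theorem pushOutOfBall_mem_sphere {c y : ℂ} {ε : ℝ} (hy : y ≠ c) (h : ‖y - c‖ ≤ ε) :
    pushOutOfBall c ε y ∈ sphere c ε := by
  have norm_pos : 0 < ‖y - c‖ := norm_pos_iff.2 (sub_ne_zero.2 hy)
  have : 1 ≤ ε / ‖y - c‖ := (one_le_div norm_pos).2 h
  rw [mem_sphere_iff_norm, pushOutOfBall, max_eq_left this, add_sub_cancel_left, norm_smul,
    Real.norm_of_nonneg (zero_le_one.trans this), div_mul_cancel₀ _ norm_pos.ne']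

theorem exists_continuous_leftInverse_on_compact {f : ℂ → ℂ} {s : Set ℂ} (hs : IsCompact s)
    (hf : ContinuousOn f s) (hi : InjOn f s) : ∃ G : ℂ → ℂ, Continuous G ∧ LeftInvOn G f s := by
  have := isCompact_iff_compactSpace.1 hs
  have embedding : IsClosedEmbedding (s.domRestrict f) :=
    hf.domRestrict.isClosedEmbedding (injOn_iff_injective.1 hi)
  obtain ⟨G, hG⟩ := ContinuousMap.exists_extension embedding
    ⟨_, continuous_subtype_val (p := (· ∈ s))⟩
  exact ⟨G, G.continuous, fun z hz ↦ DFunLike.congr_fun hG ⟨z, hz⟩⟩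

theorem exists_pos_forall_sphere_le_norm_sub {f : ℂ → ℂ} (hf : ContinuousOn f (closedBall 0 1))
    (hi : InjOn f (closedBall 0 1)) : ∃ r > 0, ∀ z ∈ sphere (0 : ℂ) 1, r ≤ ‖f z - f 0‖ := by
  obtain ⟨z₀, hz₀, hmin⟩ := (isCompact_sphere (0 : ℂ) 1).exists_isMinOn
    (NormedSpace.sphere_nonempty.2 zero_le_one)
    ((hf.mono sphere_subset_closedBall).sub (continuousOn_const (c := f 0))).norm
  refine ⟨_, norm_pos_iff.2 (sub_ne_zero.2 fun h ↦ ?_), fun z hz ↦ hmin hz⟩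
  simp [hi (sphere_subset_closedBall hz₀) (mem_closedBall_self zero_le_one) h] at hz₀

theorem exists_pos_forall_le_norm_of_far {f : ℂ → ℂ} {s : Set ℂ} {c : ℂ} {ρ : ℝ}
    (hf : ContinuousWithinAt f s 0) (hc : ‖f 0 - c‖ < ρ) :
    ∃ δ > 0, ∀ z ∈ s, ρ ≤ ‖f z - c‖ → δ ≤ ‖z‖ := by
  have near : ∀ᶠ z in 𝓝[s] 0, ‖f z - c‖ < ρ :=
    (hf.sub continuousWithinAt_const).norm.eventually_lt continuousWithinAt_const hc
  obtain ⟨δ, δ_pos, hδ⟩ := mem_nhdsWithin_iff.1 near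
  refine ⟨δ, δ_pos, fun z hz far ↦ le_of_not_gt fun hz' ↦ ?_⟩
  exact (hδ ⟨mem_ball_zero_iff.2 hz', hz⟩).not_ge far

/- If `c` is a missed value near `f 0`, approximate the inverse of `f` by a map `P` without zeros on
a small circle around `c`, and precompose it with the radial push off `c`: the composite with `f` is
close to the identity on the unit circle but has no zero in the disc. -/
theorem image_closedBall_mem_nhds_of_injOn {f : ℂ → ℂ} (hf : ContinuousOn f (closedBall 0 1))
    (hi : InjOn f (closedBall 0 1)) : f '' closedBall 0 1 ∈ 𝓝 (f 0) := by
  by_contra not_nhds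
  obtain ⟨G, G_cont, G_inv⟩ :=
    exists_continuous_leftInverse_on_compact (isCompact_closedBall 0 1) hf hi
  obtain ⟨r, r_pos, circle_far⟩ := exists_pos_forall_sphere_le_norm_sub hf hi
  obtain ⟨c, c_near, c_missed⟩ : ∃ c ∈ ball (f 0) (r / 2), c ∉ f '' closedBall 0 1 :=
    not_subset.1 fun h ↦ not_nhds (mem_of_superset (ball_mem_nhds _ (half_pos r_pos)) h)
  rw [mem_ball_iff_norm'] at c_near
  have f_ne (z : ℂ) (hz : z ∈ closedBall (0 : ℂ) 1) : f z ≠ c := fun h ↦ c_missed ⟨z, hz, h⟩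
  obtain ⟨δ, δ_pos, far_of_far⟩ :
      ∃ δ > 0, ∀ z ∈ closedBall (0 : ℂ) 1, r / 2 ≤ ‖f z - c‖ → δ ≤ ‖z‖ :=
    exists_pos_forall_le_norm_of_far (hf 0 (mem_closedBall_self zero_le_one)) c_near
  obtain ⟨P, P_cont, P_near, P_ne⟩ := exists_continuous_near_ne_zero_on_sphere G_cont
    (lt_min δ_pos one_pos) c (r / 2)
  have near_id (z : ℂ) (hz : z ∈ closedBall (0 : ℂ) 1) : ‖P (f z) - z‖ < min δ 1 := by
    simpa [G_inv hz] using P_near (f z)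
  obtain ⟨z, hz, P_zero⟩ : ∃ z ∈ closedBall (0 : ℂ) 1, P (pushOutOfBall c (r / 2) (f z)) = 0 := by
    refine exists_zero_of_norm_sub_lt_one (h := fun z ↦ P (pushOutOfBall c (r / 2) (f z)))
      (P_cont.comp_continuousOn ((continuousOn_pushOutOfBall c _).comp hf f_ne)) fun z hz ↦ ?_
    have far : r / 2 ≤ ‖f z - c‖ := by
      linarith [circle_far z hz, norm_sub_le_norm_sub_add_norm_sub (f z) c (f 0),
        norm_sub_rev c (f 0)]
    rw [pushOutOfBall_of_le far]
    exact (near_id z (sphere_subset_closedBall hz)).trans_le (min_le_right _ _)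
  rcases le_total ‖f z - c‖ (r / 2) with near | far
  · exact P_ne _ (pushOutOfBall_mem_sphere (f_ne z hz) near) P_zero
  · have := near_id z hz
    rw [← pushOutOfBall_of_le far, P_zero, zero_sub, norm_neg] at this
    exact (this.trans_le (min_le_left _ _)).not_ge (far_of_far z hz far)

end PlanarInvarianceOfDomain

section LocallyPlanar

variable {M N : Type*} [TopologicalSpace M] [TopologicalSpace N]

/-- A space that near each of its points injects continuously into the plane. Surfaces are the
main example; the inverse need not be continuous, and dimension at most two is allowed. -/
def LocallyPlanar (M : Type*) [TopologicalSpace M] : Prop :=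
  ∀ x : M, ∃ U ∈ 𝓝 x, ∃ e : M → ℂ, ContinuousOn e U ∧ InjOn e U

theorem LocallyPlanar.of_injective (hN : LocallyPlanar N) {f : M → N} (hf : Continuous f)
    (hi : Function.Injective f) : LocallyPlanar M := by
  intro x
  obtain ⟨U, hU, e, e_cont, e_inj⟩ := hN (f x)
  exact ⟨f ⁻¹' U, hf.continuousAt hU, e ∘ f, e_cont.comp hf.continuousOn (mapsTo_preimage f U),
    e_inj.comp hi.injOn (mapsTo_preimage f U)⟩

theorem LocallyPlanar.image {K : Set M} (hK : LocallyPlanar K) (h : M ≃ₜ N) :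
    LocallyPlanar (h '' K) :=
  hK.of_injective (h.image K).symm.continuous (h.image K).symm.injective

theorem LocallyPlanar.of_chartedSpace (hN : LocallyPlanar N) [ChartedSpace N M] :
    LocallyPlanar M := by
  intro x
  have source_nhds := chart_source_mem_nhds N x
  obtain ⟨U, hU, e, e_cont, e_inj⟩ := hN (chartAt N x x)
  have chart_cont : ContinuousOn (chartAt N x) ((chartAt N x).source ∩ chartAt N x ⁻¹' U) :=
    (chartAt N x).continuousOn.mono inter_subset_left
  exact ⟨(chartAt N x).source ∩ chartAt N x ⁻¹' U,
    inter_mem source_nhds ((chartAt N x).continuousAt (mem_chart_source N x) hU),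
    e ∘ chartAt N x, e_cont.comp chart_cont fun _ h ↦ h.2,
    e_inj.comp ((chartAt N x).injOn.mono inter_subset_left) fun _ h ↦ h.2⟩

theorem locallyPlanar_euclideanPlane : LocallyPlanar (EuclideanSpace ℝ (Fin 2)) := fun _ ↦
  ⟨univ, univ_mem, Complex.orthonormalBasisOneI.repr.symm,
    (LinearIsometryEquiv.continuous _).continuousOn, (LinearIsometryEquiv.injective _).injOn⟩

theorem locallyPlanar_sphere2 : LocallyPlanar Sphere2 := by
  have : Fact (Module.finrank ℝ (EuclideanSpace ℝ (Fin 3)) = 2 + 1) := ⟨by simp⟩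
  exact locallyPlanar_euclideanPlane.of_chartedSpace (M := sphere (0 : EuclideanSpace ℝ (Fin 3)) 1)

theorem LocallyPlanar.isOpenMap (hM : LocallyPlanar M) {γ : ℂ → M} (hγ : Continuous γ)
    (hi : Function.Injective γ) : IsOpenMap γ := by
  refine isOpenMap_iff_nhds_le.2 fun z V hV ↦ ?_
  obtain ⟨U, hU, e, e_cont, e_inj⟩ := hM (γ z)
  obtain ⟨δ, δ_pos, ball_sub⟩ := nhds_basis_closedBall.mem_iff.1
    (inter_mem hV (hγ.continuousAt hU))
  have scaled_mem (u : ℂ) (hu : u ∈ closedBall (0 : ℂ) 1) : z + δ * u ∈ γ ⁻¹' V ∩ γ ⁻¹' U := by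
    refine ball_sub (mem_closedBall_iff_norm.2 ?_)
    simpa [abs_of_pos δ_pos] using mul_le_mul_of_nonneg_left (mem_closedBall_zero_iff.1 hu) δ_pos.le
  have image_nhds : (fun u : ℂ ↦ e (γ (z + δ * u))) '' closedBall 0 1 ∈ 𝓝 (e (γ z)) := by
    have := image_closedBall_mem_nhds_of_injOn (f := fun u : ℂ ↦ e (γ (z + δ * u)))
      (e_cont.comp (by fun_prop) fun u hu ↦ (scaled_mem u hu).2) ?_
    · simpa using this
    · intro u hu u' hu' h
      have := hi (e_inj (scaled_mem u hu).2 (scaled_mem u' hu').2 h)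
      simpa [δ_pos.ne'] using this
  filter_upwards [hU, (e_cont.continuousAt hU).preimage_mem_nhds image_nhds]
  rintro x hx ⟨u, hu, hux⟩
  rw [← e_inj (scaled_mem u hu).2 hx hux]
  exact (scaled_mem u hu).1

end LocallyPlanar

section Isotopy

variable {X Y : Type*} [TopologicalSpace X] [TopologicalSpace Y]

/-- `h` is the end of an isotopy of `X` starting at the identity. As in `AmbientIsotopic`, time is
the whole real line, of which only `[0, 1]` matters. -/
def IsIsotopicToRefl (h : X ≃ₜ X) : Prop :=
  ∃ H : ℝ → X ≃ₜ X, Continuous (fun q : ℝ × X ↦ H q.1 q.2) ∧ H 0 = Homeomorph.refl X ∧ H 1 = h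

theorem isIsotopicToRefl_refl : IsIsotopicToRefl (Homeomorph.refl X) :=
  ⟨fun _ ↦ Homeomorph.refl X, continuous_snd, rfl, rfl⟩

theorem IsIsotopicToRefl.trans {h h' : X ≃ₜ X} (hh : IsIsotopicToRefl h)
    (hh' : IsIsotopicToRefl h') : IsIsotopicToRefl (h.trans h') := by
  obtain ⟨H, H_cont, H_zero, rfl⟩ := hh
  obtain ⟨H', H'_cont, H'_zero, rfl⟩ := hh'
  refine ⟨fun t ↦ (H t).trans (H' t), H'_cont.comp (continuous_fst.prodMk H_cont), ?_, rfl⟩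
  simp only [H_zero, H'_zero]
  rfl

theorem IsIsotopicToRefl.conj {h : Y ≃ₜ Y} (hh : IsIsotopicToRefl h) (Ψ : X ≃ₜ Y) :
    IsIsotopicToRefl ((Ψ.trans h).trans Ψ.symm) := by
  obtain ⟨H, H_cont, H_zero, rfl⟩ := hh
  refine ⟨fun t ↦ (Ψ.trans (H t)).trans Ψ.symm, Ψ.symm.continuous.comp (H_cont.comp
    (continuous_fst.prodMk (Ψ.continuous.comp continuous_snd))), ?_, rfl⟩
  simp only [H_zero]
  exact Ψ.self_trans_symm

/-- Ambient isotopy of two subsets of an arbitrary space. -/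
def IsotopicSets (K L : Set X) : Prop :=
  ∃ h : X ≃ₜ X, IsIsotopicToRefl h ∧ h '' K = L

theorem ambientIsotopic_iff_isotopicSets {K L : Set (Fin 4 → ℝ)} :
    AmbientIsotopic K L ↔ IsotopicSets K L :=
  ⟨fun ⟨H, H_cont, H_zero, hKL⟩ ↦ ⟨H 1, ⟨H, H_cont, H_zero, rfl⟩, hKL⟩,
    fun ⟨_, ⟨H, H_cont, H_zero, H_one⟩, hKL⟩ ↦ ⟨H, H_cont, H_zero, H_one ▸ hKL⟩⟩

namespace IsotopicSets

theorem refl (K : Set X) : IsotopicSets K K :=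
  ⟨_, isIsotopicToRefl_refl, image_id K⟩

theorem trans {K L M : Set X} (hKL : IsotopicSets K L) (hLM : IsotopicSets L M) :
    IsotopicSets K M := by
  obtain ⟨h, hh, rfl⟩ := hKL
  obtain ⟨h', hh', rfl⟩ := hLM
  exact ⟨h.trans h', hh.trans hh', image_comp h' h K⟩

theorem of_image (Ψ : X ≃ₜ Y) {K L : Set X} (h : IsotopicSets (Ψ '' K) (Ψ '' L)) :
    IsotopicSets K L := by
  obtain ⟨g, hg, hKL⟩ := h
  refine ⟨_, hg.conj Ψ, ?_⟩
  calc (Ψ.trans g).trans Ψ.symm '' K = Ψ.symm '' (g '' (Ψ '' K)) := by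
        rw [image_image, image_image]; rfl
    _ = L := by rw [hKL]; exact Ψ.toEquiv.symm_image_image L

theorem isClosed {K L : Set X} (hKL : IsotopicSets K L) (hK : IsClosed K) : IsClosed L := by
  obtain ⟨h, -, rfl⟩ := hKL
  exact h.isClosedMap K hK

theorem locallyPlanar {K L : Set X} (hKL : IsotopicSets K L) (hK : LocallyPlanar K) :
    LocallyPlanar L := by
  obtain ⟨h, -, rfl⟩ := hKL
  exact hK.image h

end IsotopicSets

end Isotopy

section VerticalPush

/-- A continuous family of strictly increasing self-maps of the line which, for each parameter, move
points by a bounded amount. -/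
structure IsVerticalPush {Y : Type*} [TopologicalSpace Y] (f : Y → ℝ → ℝ) : Prop where
  continuous : Continuous fun p : Y × ℝ ↦ f p.1 p.2
  strictMono : ∀ y, StrictMono (f y)
  exists_abs_sub_le : ∀ y, ∃ b, ∀ w, |f y w - w| ≤ b

namespace IsVerticalPush

variable {Y : Type*} [TopologicalSpace Y] {f : Y → ℝ → ℝ}

theorem surjective (hf : IsVerticalPush f) (y : Y) : Function.Surjective (f y) := by
  intro w
  obtain ⟨b, hb⟩ := hf.exists_abs_sub_le y
  refine mem_range_of_exists_le_of_exists_ge (hf.continuous.comp (Continuous.prodMk_right y))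
    ⟨w - b, ?_⟩ ⟨w + b, ?_⟩
  · linarith [(abs_le.1 (hb (w - b))).2]
  · linarith [(abs_le.1 (hb (w + b))).1]

/-- The order automorphism of the fibre over `y`. -/
noncomputable def orderIso (hf : IsVerticalPush f) (y : Y) : ℝ ≃o ℝ :=
  (hf.strictMono y).orderIsoOfSurjective (f y) (hf.surjective y)

theorem continuous_orderIso_symm (hf : IsVerticalPush f) :
    Continuous fun p : Y × ℝ ↦ (hf.orderIso p.1).symm p.2 := by
  refine continuous_iff_continuousAt.2 fun ⟨y, w⟩ ↦ tendsto_order.2 ⟨fun a ha ↦ ?_, fun a ha ↦ ?_⟩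
  all_goals
    have slice_cont : Continuous fun p : Y × ℝ ↦ f p.1 a :=
      hf.continuous.comp (continuous_fst.prodMk continuous_const)
  · have : f y a < w := (hf.orderIso y).lt_symm_apply.1 ha
    filter_upwards [slice_cont.continuousAt.eventually_lt continuousAt_snd this] with p hp
    exact (hf.orderIso p.1).lt_symm_apply.2 hp
  · have : w < f y a := (hf.orderIso y).symm_apply_lt.1 ha
    filter_upwards [continuousAt_snd.eventually_lt slice_cont.continuousAt this] with p hp
    exact (hf.orderIso p.1).symm_apply_lt.2 hp

/-- The homeomorphism `(y, w) ↦ (y, f y w)`. -/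
noncomputable def homeomorph (hf : IsVerticalPush f) : Y × ℝ ≃ₜ Y × ℝ where
  toFun p := (p.1, f p.1 p.2)
  invFun p := (p.1, (hf.orderIso p.1).symm p.2)
  left_inv p := Prod.ext rfl ((hf.orderIso p.1).symm_apply_apply p.2)
  right_inv p := Prod.ext rfl ((hf.orderIso p.1).apply_symm_apply p.2)
  continuous_toFun := continuous_fst.prodMk hf.continuous
  continuous_invFun := continuous_fst.prodMk hf.continuous_orderIso_symm

theorem homeomorph_apply (hf : IsVerticalPush f) (p : Y × ℝ) :
    hf.homeomorph p = (p.1, f p.1 p.2) := rfl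

theorem lineMap_id (hf : IsVerticalPush f) {t : ℝ} (ht : t ∈ Icc (0 : ℝ) 1) :
    IsVerticalPush fun y w ↦ AffineMap.lineMap w (f y w) t where
  continuous := continuous_snd.lineMap hf.continuous continuous_const
  strictMono y w w' hw := by
    have hfw := hf.strictMono y hw
    simp only [AffineMap.lineMap_apply_ring']
    rcases ht.2.lt_or_eq with ht1 | rfl
    · nlinarith [ht.1, mul_nonneg ht.1 (sub_pos.2 hfw).le]
    · linarith
  exists_abs_sub_le y := by
    obtain ⟨b, hb⟩ := hf.exists_abs_sub_le y
    refine ⟨b, fun w ↦ ?_⟩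
    rw [AffineMap.lineMap_apply_ring', add_sub_cancel_right, abs_mul, abs_of_nonneg ht.1]
    exact (mul_le_of_le_one_left (abs_nonneg _) ht.2).trans (hb w)

theorem isIsotopicToRefl_homeomorph (hf : IsVerticalPush f) : IsIsotopicToRefl hf.homeomorph := by
  let clamp (t : ℝ) : Icc (0 : ℝ) 1 := projIcc 0 1 zero_le_one t
  refine ⟨fun t ↦ (hf.lineMap_id (clamp t).2).homeomorph, ?_, ?_, ?_⟩
  · have clamp_cont : Continuous clamp := continuous_projIcc
    have f_cont := hf.continuous
    simp only [homeomorph_apply, AffineMap.lineMap_apply_ring']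
    fun_prop
  · ext p <;> simp [homeomorph_apply, clamp]
  · ext p <;> simp [homeomorph_apply, clamp]

end IsVerticalPush

/-- The piecewise linear self-map of the line which moves `α` to `α + c` and is the identity outside
`[α - ψ, α + c + ψ]`. For `ψ = 0` it is only used with `c = 0`, where it is the identity. -/
noncomputable def linePush (α ψ c w : ℝ) : ℝ :=
  max w (min (w + c * (1 - (α - w) / ψ)) (w + c * (1 - (w - α) / (c + ψ))))

section linePush

variable {α ψ c w : ℝ}

theorem linePush_zero_shift : linePush α ψ 0 w = w := by
  simp [linePush]

theorem linePush_base (hc : 0 ≤ c) : linePush α ψ c α = α + c := by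
  simp [linePush, hc]

theorem linePush_of_le (hψ : 0 < ψ) (hc : 0 ≤ c) (hw : w ≤ α - ψ) : linePush α ψ c w = w := by
  have : 1 ≤ (α - w) / ψ := (one_le_div hψ).2 (by linarith)
  exact max_eq_left (min_le_of_left_le (by nlinarith))

theorem linePush_of_ge (hψ : 0 < ψ) (hc : 0 ≤ c) (hw : α + c + ψ ≤ w) : linePush α ψ c w = w := by
  have : 1 ≤ (w - α) / (c + ψ) := (one_le_div (by positivity)).2 (by linarith)
  exact max_eq_left (min_le_of_right_le (by nlinarith))

theorem abs_linePush_sub_le (hψ : 0 ≤ ψ) (hc : 0 ≤ c) : |linePush α ψ c w - w| ≤ c := by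
  refine abs_le.2 ⟨?_, sub_le_iff_le_add'.2 (max_le (by linarith) ?_)⟩
  · linarith [show w ≤ linePush α ψ c w from le_max_left _ _]
  · rcases le_total w α with h | h
    · have : 0 ≤ (α - w) / ψ := div_nonneg (sub_nonneg.2 h) hψ
      exact min_le_of_left_le (by nlinarith)
    · have : 0 ≤ (w - α) / (c + ψ) := div_nonneg (sub_nonneg.2 h) (by positivity)
      exact min_le_of_right_le (by nlinarith)

theorem strictMono_linePush (hψ : 0 < ψ) (hc : 0 ≤ c) : StrictMono (linePush α ψ c) := by
  intro w w' hw
  have rising : w + c * (1 - (α - w) / ψ) < w' + c * (1 - (α - w') / ψ) := by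
    have : (α - w') / ψ ≤ (α - w) / ψ := by gcongr
    nlinarith
  have falling : w + c * (1 - (w - α) / (c + ψ)) < w' + c * (1 - (w' - α) / (c + ψ)) := by
    have slope : c / (c + ψ) < 1 := (div_lt_one (by positivity)).2 (by linarith)
    have : c * ((w' - α) / (c + ψ)) - c * ((w - α) / (c + ψ)) = c / (c + ψ) * (w' - w) := by ring
    nlinarith
  exact max_lt_max hw (min_lt_min rising falling)

end linePush

theorem continuous_of_dist_le {X M : Type*} [TopologicalSpace X] [MetricSpace M] {f g : X → M}
    {c : X → ℝ} (hg : Continuous g) (hc : Continuous c) (h : ∀ x, dist (f x) (g x) ≤ c x)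
    (hf : ∀ x, c x ≠ 0 → ContinuousAt f x) : Continuous f := by
  refine continuous_iff_continuousAt.2 fun x ↦ ?_
  by_cases hx : c x = 0
  · have fg : f x = g x := dist_le_zero.1 (hx ▸ h x)
    have dist_tendsto : Tendsto (fun x ↦ dist (g x) (f x)) (𝓝 x) (𝓝 0) :=
      squeeze_zero (fun _ ↦ dist_nonneg) (fun x ↦ dist_comm (f x) (g x) ▸ h x)
        (hx ▸ hc.continuousAt)
    simpa only [ContinuousAt, fg] using hg.continuousAt.congr_dist dist_tendsto
  · exact hf x hx

theorem isVerticalPush_linePush {Y : Type*} [TopologicalSpace Y] {α ψ c : Y → ℝ}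
    (hα : Continuous α) (hψ : Continuous ψ) (hc : Continuous c) (hψ_nonneg : ∀ y, 0 ≤ ψ y)
    (hc_nonneg : ∀ y, 0 ≤ c y) (hψc : ∀ y, ψ y = 0 → c y = 0) :
    IsVerticalPush fun y w ↦ linePush (α y) (ψ y) (c y) w where
  continuous := by
    refine continuous_of_dist_le (g := Prod.snd) (c := fun p ↦ c p.1) continuous_snd
      (hc.comp continuous_fst) (fun p ↦ abs_linePush_sub_le (hψ_nonneg p.1) (hc_nonneg p.1)) ?_
    intro p hp
    have ψ_ne : ψ p.1 ≠ 0 := fun h ↦ hp (hψc p.1 h)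
    have : c p.1 + ψ p.1 ≠ 0 :=
      (add_pos_of_nonneg_of_pos (hc_nonneg _) ((hψ_nonneg _).lt_of_ne' ψ_ne)).ne'
    unfold linePush
    fun_prop (disch := assumption)
  strictMono y := by
    rcases (hψ_nonneg y).eq_or_lt' with h | h
    · simp only [hψc y h, linePush_zero_shift]
      exact strictMono_id
    · exact strictMono_linePush h (hc_nonneg y)
  exists_abs_sub_le y := ⟨c y, fun _ ↦ abs_linePush_sub_le (hψ_nonneg y) (hc_nonneg y)⟩

variable {Y : Type*} [PseudoMetricSpace Y] {α β : Y → ℝ} {C : Set (Y × ℝ)}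

/-- The distance from the segment `{y} × [α y, β y]` to `C`, with the segment parametrised by the
unit interval so that the infimum runs over a fixed compact set. -/
noncomputable def segmentInfDist (α β : Y → ℝ) (C : Set (Y × ℝ)) (y : Y) : ℝ :=
  sInf ((fun u ↦ infDist (y, AffineMap.lineMap (α y) (β y) u) C) '' Icc (0 : ℝ) 1)

theorem continuous_infDist_lineMap (hα : Continuous α) (hβ : Continuous β) :
    Continuous fun p : Y × ℝ ↦ infDist (p.1, AffineMap.lineMap (α p.1) (β p.1) p.2) C :=
  (continuous_infDist_pt C).comp <| continuous_fst.prodMk <|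
    (hα.comp continuous_fst).lineMap (hβ.comp continuous_fst) continuous_snd

theorem continuous_segmentInfDist (hα : Continuous α) (hβ : Continuous β) :
    Continuous (segmentInfDist α β C) :=
  isCompact_Icc.continuous_sInf (continuous_infDist_lineMap hα hβ)

theorem segmentInfDist_nonneg (y : Y) : 0 ≤ segmentInfDist α β C y :=
  Real.sInf_nonneg (forall_mem_image.2 fun _ _ ↦ infDist_nonneg)

theorem segmentInfDist_eq_sInf {y : Y} (hαβ : α y ≤ β y) :
    segmentInfDist α β C y = sInf ((fun v ↦ infDist (y, v) C) '' Icc (α y) (β y)) := by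
  rw [segmentInfDist, ← segment_eq_Icc hαβ, segment_eq_image_lineMap, image_image]

theorem exists_segmentInfDist_eq {y : Y} (hαβ : α y ≤ β y) :
    ∃ v ∈ Icc (α y) (β y), segmentInfDist α β C y = infDist (y, v) C := by
  rw [segmentInfDist_eq_sInf hαβ]
  exact isCompact_Icc.exists_sInf_image_eq (nonempty_Icc.2 hαβ) (by fun_prop)

theorem segmentInfDist_le {y : Y} {v w : ℝ} (hv : v ∈ Icc (α y) (β y)) (hw : (y, w) ∈ C) :
    segmentInfDist α β C y ≤ |v - w| := by
  rw [segmentInfDist_eq_sInf (hv.1.trans hv.2)]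
  calc sInf ((fun v ↦ infDist (y, v) C) '' Icc (α y) (β y))
      ≤ infDist (y, v) C :=
        csInf_le ⟨0, forall_mem_image.2 fun _ _ ↦ infDist_nonneg⟩ (mem_image_of_mem _ hv)
    _ ≤ dist (y, v) (y, w) := infDist_le_dist_of_mem hw
    _ = |v - w| := by rw [dist_prod_same_left, Real.dist_eq]

theorem exists_gap (hα : Continuous α) (hβ : Continuous β) (hαβ : ∀ y, α y ≤ β y)
    (hC : IsClosed C) :
    ∃ ψ : Y → ℝ, Continuous ψ ∧ (∀ y, 0 ≤ ψ y) ∧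
      (∀ y, ψ y = 0 → ∃ w ∈ Icc (α y) (β y), (y, w) ∈ C) ∧
      ∀ y w, (y, w) ∈ C → ψ y = 0 ∨ w ≤ α y - ψ y ∨ β y + ψ y ≤ w := by
  -- The extra graph makes all distances below distances to a nonempty set.
  let C' : Set (Y × ℝ) := C ∪ {p | p.2 = β p.1 + 1}
  have C'_closed : IsClosed C' := hC.union (isClosed_eq (by fun_prop) (by fun_prop))
  refine ⟨segmentInfDist α β C', continuous_segmentInfDist hα hβ, segmentInfDist_nonneg,
    fun y hy ↦ ?_, fun y w hw ↦ ?_⟩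
  · obtain ⟨v, hv, h⟩ := exists_segmentInfDist_eq (C := C') (hαβ y)
    have mem_C' : (y, v) ∈ C' :=
      (C'_closed.mem_iff_infDist_zero ⟨(y, β y + 1), .inr rfl⟩).2 (h.symm.trans hy)
    refine ⟨v, hv, mem_C'.resolve_right fun h ↦ ?_⟩
    exact (lt_add_one (β y)).not_ge (h.symm.trans_le hv.2)
  · have le_abs (v : ℝ) (hv : v ∈ Icc (α y) (β y)) : segmentInfDist α β C' y ≤ |v - w| :=
      segmentInfDist_le hv (.inl hw)
    rcases lt_or_ge w (α y) with below | above_base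
    · have := le_abs _ (left_mem_Icc.2 (hαβ y))
      rw [abs_of_pos (sub_pos.2 below)] at this
      exact .inr (.inl (by linarith))
    rcases lt_or_ge (β y) w with above | below_top
    · have := le_abs _ (right_mem_Icc.2 (hαβ y))
      rw [abs_of_neg (sub_neg.2 above)] at this
      exact .inr (.inr (by linarith))
    · have := le_abs w ⟨above_base, below_top⟩
      rw [sub_self, abs_zero] at this
      exact .inl (this.antisymm (segmentInfDist_nonneg y))

theorem exists_shift (hα : Continuous α) (hβ : Continuous β) (hαβ : ∀ y, α y ≤ β y) {ψ : Y → ℝ}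
    (hψ : Continuous ψ) {Z : Set Y} (hZ : IsClosed Z) (hψZ : ∀ y ∈ Z, ψ y = 0 → α y = β y) :
    ∃ c : Y → ℝ, Continuous c ∧ (∀ y, c y ∈ Icc 0 (β y - α y)) ∧ (∀ y, ψ y = 0 → c y = 0) ∧
      ∀ y ∈ Z, c y = β y - α y := by
  have zero_closed : IsClosed {y | ψ y = 0} := isClosed_eq hψ continuous_const
  let c₀ : Y → ℝ := Z.indicator (β - α)
  have c₀_Z : EqOn c₀ (β - α) Z := eqOn_indicator
  have c₀_zero : EqOn c₀ 0 {y | ψ y = 0} := by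
    intro y hy
    by_cases hyZ : y ∈ Z
    · simp [c₀_Z hyZ, hψZ y hyZ hy]
    · exact indicator_of_notMem hyZ _
  have c₀_cont : ContinuousOn c₀ (Z ∪ {y | ψ y = 0}) :=
    ((hβ.sub hα).continuousOn.congr c₀_Z).union_of_isClosed (continuousOn_const.congr c₀_zero) hZ
      zero_closed
  obtain ⟨c, hc⟩ := ContinuousMap.exists_restrict_eq (hZ.union zero_closed)
    ⟨_, c₀_cont.domRestrict⟩
  have c_eq (y : Y) (hy : y ∈ Z ∪ {y | ψ y = 0}) : c y = c₀ y := DFunLike.congr_fun hc ⟨y, hy⟩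
  have nonneg (y : Y) : 0 ≤ β y - α y := sub_nonneg.2 (hαβ y)
  refine ⟨fun y ↦ max 0 (min (c y) (β y - α y)), by fun_prop,
    fun y ↦ ⟨le_max_left _ _, max_le (nonneg y) (min_le_right _ _)⟩, fun y hy ↦ ?_, fun y hy ↦ ?_⟩
  · simp [c_eq y (.inr hy), c₀_zero hy]
  · simp [c_eq y (.inl hy), c₀_Z hy, nonneg y]

theorem exists_isotopic_push_graph (hα : Continuous α) (hβ : Continuous β)
    (hαβ : ∀ y, α y ≤ β y) (hC : IsClosed C) {Z : Set Y} (hZ : IsClosed Z)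
    (hCZ : ∀ y ∈ Z, ∀ w ∈ Icc (α y) (β y), (y, w) ∈ C → α y = β y) :
    ∃ h : Y × ℝ ≃ₜ Y × ℝ, IsIsotopicToRefl h ∧ EqOn h id C ∧ ∀ y ∈ Z, h (y, α y) = (y, β y) := by
  obtain ⟨ψ, ψ_cont, ψ_nonneg, ψ_zero, C_far⟩ := exists_gap hα hβ hαβ hC
  obtain ⟨c, c_cont, c_mem, c_zero, c_Z⟩ := exists_shift hα hβ hαβ ψ_cont hZ fun y hy hψ ↦
    let ⟨w, hw, hwC⟩ := ψ_zero y hψ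
    hCZ y hy w hw hwC
  have push := isVerticalPush_linePush hα ψ_cont c_cont ψ_nonneg (fun y ↦ (c_mem y).1) c_zero
  refine ⟨push.homeomorph, push.isIsotopicToRefl_homeomorph, ?_, fun y hy ↦ ?_⟩
  · rintro ⟨y, w⟩ hw
    refine Prod.ext rfl ?_
    rcases (ψ_nonneg y).eq_or_lt' with hψ | hψ
    · rw [push.homeomorph_apply, c_zero y hψ, linePush_zero_shift]
      rfl
    · rcases (C_far y w hw).resolve_left hψ.ne' with below | above
      · exact linePush_of_le hψ (c_mem y).1 below
      · exact linePush_of_ge hψ (c_mem y).1 (by linarith [(c_mem y).2])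
  · rw [push.homeomorph_apply, linePush_base (c_mem y).1, c_Z y hy, add_sub_cancel]

end VerticalPush

section GraphExchange

theorem LocallyPlanar.range_mem_nhdsWithin {X : Type*} [TopologicalSpace X] {K : Set X}
    (hK : LocallyPlanar K) {γ : ℂ → X} (hγ : Continuous γ) (hi : Function.Injective γ)
    (hγK : ∀ z, γ z ∈ K) (z : ℂ) : range γ ∈ 𝓝[K] γ z := by
  have open_map : IsOpenMap (codRestrict γ K hγK) :=
    hK.isOpenMap (hγ.codRestrict hγK) (hi.codRestrict hγK)
  have : range (codRestrict γ K hγK) ∈ 𝓝 (codRestrict γ K hγK z) :=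
    open_map.isOpen_range.mem_nhds (mem_range_self z)
  filter_upwards [(mem_nhds_subtype_iff_nhdsWithin).1 this]
  rintro _ ⟨_, ⟨z', rfl⟩, rfl⟩
  exact mem_range_self z'

theorem inter_eq_image_graph {Y : Type*} {α : Y → ℝ} {Z : Set Y} {K F : Set (Y × ℝ)}
    (hαF : ∀ y ∈ Z, (y, α y) ∈ F) (hFZ : ∀ p ∈ F, p.1 ∈ Z)
    (hK : ∀ p ∈ F, p ∈ K ↔ p.2 = α p.1) : K ∩ F = (fun y ↦ (y, α y)) '' Z := by
  ext p
  constructor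
  · rintro ⟨hpK, hpF⟩
    exact ⟨p.1, hFZ p hpF, Prod.ext rfl ((hK p hpF).1 hpK).symm⟩
  · rintro ⟨y, hy, rfl⟩
    exact ⟨(hK _ (hαF y hy)).2 rfl, hαF y hy⟩

variable {Y : Type*} [PseudoMetricSpace Y] {α β : Y → ℝ} {Z : Set Y} {K K' F : Set (Y × ℝ)}

/- Through a point of the lower graph away from the crease `α = β` passes a disc of the graph; by
invariance of domain it is a neighbourhood in `K`, so nothing else of `K` accumulates there. -/
theorem eq_of_mem_closure_diff (hK : IsClosed K) (hKp : LocallyPlanar K) (hα : Continuous α)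
    (hdisc : ∀ y ∈ Z, α y < β y →
      ∃ κ : ℂ → Y, Continuous κ ∧ Function.Injective κ ∧ κ 0 = y ∧ ∀ z, κ z ∈ Z)
    (hαβ : ∀ y ∈ Z, α y ≤ β y)
    (hF : ∀ p, p ∈ F ↔ p.1 ∈ Z ∧ p.2 ∈ Icc (α p.1) (β p.1))
    (hlow : ∀ p ∈ F, p ∈ K ↔ p.2 = α p.1) {p : Y × ℝ} (hpF : p ∈ F)
    (hp : p ∈ closure (K \ F)) : α p.1 = β p.1 := by
  have hpZ : p.1 ∈ Z := ((hF p).1 hpF).1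
  refine (hαβ _ hpZ).eq_of_not_lt fun hlt ↦ ?_
  have p_low : p.2 = α p.1 :=
    (hlow p hpF).1 (hK.closure_subset_iff.2 sdiff_subset hp)
  obtain ⟨κ, κ_cont, κ_inj, κ_zero, κ_Z⟩ := hdisc p.1 hpZ hlt
  let γ (z : ℂ) : Y × ℝ := (κ z, α (κ z))
  have γ_F (z : ℂ) : γ z ∈ F := (hF _).2 ⟨κ_Z z, left_mem_Icc.2 (hαβ _ (κ_Z z))⟩
  have γ_zero : γ 0 = p := Prod.ext κ_zero (by rw [p_low, ← κ_zero])
  have nhds_p : range γ ∈ 𝓝[K] p := γ_zero ▸ hKp.range_mem_nhdsWithin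
    (κ_cont.prodMk (hα.comp κ_cont)) (fun z z' h ↦ κ_inj (congrArg Prod.fst h))
    (fun z ↦ (hlow _ (γ_F z)).2 rfl) 0
  obtain ⟨V, V_nhds, hV⟩ := mem_nhdsWithin_iff_exists_mem_nhds_inter.1 nhds_p
  obtain ⟨q, hqV, hqK, hqF⟩ := mem_closure_iff_nhds.1 hp V V_nhds
  obtain ⟨z, rfl⟩ := hV ⟨hqV, hqK⟩
  exact hqF (γ_F z)

theorem isotopicSets_of_graphs (hK : IsClosed K) (hKp : LocallyPlanar K)
    (hα : Continuous α) (hβ : Continuous β) (hZ : IsClosed Z)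
    (hdisc : ∀ y ∈ Z, α y < β y →
      ∃ κ : ℂ → Y, Continuous κ ∧ Function.Injective κ ∧ κ 0 = y ∧ ∀ z, κ z ∈ Z)
    (hαβ : ∀ y ∈ Z, α y ≤ β y)
    (hF : ∀ p, p ∈ F ↔ p.1 ∈ Z ∧ p.2 ∈ Icc (α p.1) (β p.1))
    (hlow : ∀ p ∈ F, p ∈ K ↔ p.2 = α p.1) (hhigh : ∀ p ∈ F, p ∈ K' ↔ p.2 = β p.1)
    (hdiff : K \ F = K' \ F) : IsotopicSets K K' := by
  have max_Z (y : Y) (hy : y ∈ Z) : max (α y) (β y) = β y := max_eq_right (hαβ y hy)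
  obtain ⟨h, h_isotopic, h_fix, h_graph⟩ := exists_isotopic_push_graph hα (hα.max hβ)
    (fun y ↦ le_max_left _ _) (isClosed_closure (s := K \ F)) hZ fun y hy w hw hwC ↦ by
      rw [max_Z y hy] at hw ⊢
      exact eq_of_mem_closure_diff hK hKp hα hdisc hαβ hF hlow ((hF (y, w)).2 ⟨hy, hw⟩) hwC
  have F_Z (p : Y × ℝ) (hp : p ∈ F) : p.1 ∈ Z := ((hF p).1 hp).1
  have low_graph : K ∩ F = (fun y ↦ (y, α y)) '' Z :=
    inter_eq_image_graph (fun y hy ↦ (hF _).2 ⟨hy, left_mem_Icc.2 (hαβ y hy)⟩) F_Z hlow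
  have high_graph : K' ∩ F = (fun y ↦ (y, β y)) '' Z :=
    inter_eq_image_graph (fun y hy ↦ (hF _).2 ⟨hy, right_mem_Icc.2 (hαβ y hy)⟩) F_Z hhigh
  refine ⟨h, h_isotopic, ?_⟩
  calc h '' K = h '' (K ∩ F) ∪ h '' (K \ F) := by rw [← image_union, inter_union_sdiff]
    _ = (K' ∩ F) ∪ (K' \ F) := by
      congr 1
      · rw [low_graph, high_graph, image_image]
        exact image_congr fun y hy ↦ by rw [h_graph y hy, max_Z y hy]
      · rw [(h_fix.mono subset_closure).image_eq, image_id, hdiff]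
    _ = K' := inter_union_sdiff K' F

end GraphExchange

section UnitCube

variable {ι : Type*}

/-- The unit cube `[-1, 1]^S`, with the coordinates outside `S` equal to zero. -/
def unitCube (S : Finset ι) : Set (ι → ℝ) :=
  {u | (∀ i ∈ S, |u i| ≤ 1) ∧ ∀ i ∉ S, u i = 0}

/-- The facets `{u | u i = ε}` of `unitCube S`, encoded as pairs `(i, ε)`. -/
def cubeFacets (S : Finset ι) : Finset (ι × ℤˣ) := S ×ˢ Finset.univ

/-- The union of the facets in `L`. -/
def facetUnion (S : Finset ι) (L : Finset (ι × ℤˣ)) : Set (ι → ℝ) :=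
  {u ∈ unitCube S | ∃ f ∈ L, u f.1 = f.2}

theorem mem_cubeFacets {S : Finset ι} {f : ι × ℤˣ} : f ∈ cubeFacets S ↔ f.1 ∈ S := by
  simp only [cubeFacets, Finset.mem_product, Finset.mem_univ, and_true]

theorem units_mul_eq_one_iff {ε : ℤˣ} {x : ℝ} : (ε : ℝ) * x = 1 ↔ x = ε := by
  rcases Int.units_eq_one_or ε with rfl | rfl <;> simp [neg_eq_iff_eq_neg]

theorem abs_le_one_iff_forall_units {x : ℝ} : |x| ≤ 1 ↔ ∀ ε : ℤˣ, (ε : ℝ) * x ≤ 1 := by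
  constructor
  · intro hx ε
    rcases Int.units_eq_one_or ε with rfl | rfl <;> simp [abs_le.1 hx, neg_le.1 (abs_le.1 hx).1]
  · intro h
    exact abs_le'.2 ⟨by simpa using h 1, by simpa using h (-1)⟩

theorem mem_unitCube_iff_forall_cubeFacets {S : Finset ι} {u : ι → ℝ} :
    u ∈ unitCube S ↔ (∀ f ∈ cubeFacets S, (f.2 : ℝ) * u f.1 ≤ 1) ∧ ∀ i ∉ S, u i = 0 := by
  simp only [unitCube, mem_ofPred_eq, abs_le_one_iff_forall_units, mem_cubeFacets, Prod.forall]
  exact and_congr_left' (forall_congr' fun i ↦ forall_comm)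

theorem exists_disc_of_mem_open {κ : Type*} {j j' : κ} (hne : j ≠ j') {O : Set (κ → ℝ)}
    (hO : IsOpen O) {y : κ → ℝ} (hy : y ∈ O) :
    ∃ γ : ℂ → κ → ℝ, Continuous γ ∧ Function.Injective γ ∧ γ 0 = y ∧
      ∀ z, γ z ∈ O ∧ ∀ i, i ≠ j → i ≠ j' → γ z i = y i := by
  let plane (z : ℂ) : κ → ℝ := y + Pi.single j z.re + Pi.single j' z.im
  have plane_cont : Continuous plane := by
    have h (i : κ) : Continuous fun x : ℝ ↦ (Pi.single i x : κ → ℝ) :=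
      continuous_single (A := fun _ : κ ↦ ℝ) i
    exact (continuous_const.add ((h j).comp Complex.continuous_re)).add
      ((h j').comp Complex.continuous_im)
  have plane_inj : Function.Injective plane := fun z z' h ↦ by
    have h_re := congrFun h j
    have h_im := congrFun h j'
    simp only [plane, Pi.add_apply, Pi.single_eq_same, Pi.single_eq_of_ne hne,
      Pi.single_eq_of_ne hne.symm, add_zero, add_right_inj] at h_re h_im
    exact Complex.ext h_re h_im
  have plane_zero : plane 0 = y := by simp [plane]
  obtain ⟨r, r_pos, hr⟩ := Metric.isOpen_iff.1 (hO.preimage plane_cont) 0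
    (show plane 0 ∈ O from plane_zero ▸ hy)
  let disc := OpenPartialHomeomorph.univBall (0 : ℂ) r
  refine ⟨plane ∘ disc, plane_cont.comp (OpenPartialHomeomorph.continuous_univBall _ _),
    plane_inj.comp ?_, ?_, fun z ↦ ⟨hr ?_, fun i hij hij' ↦ ?_⟩⟩
  · rw [← injOn_univ, ← OpenPartialHomeomorph.univBall_source (0 : ℂ) r]
    exact disc.injOn
  · simp [disc, plane_zero]
  · rw [← OpenPartialHomeomorph.univBall_target (0 : ℂ) r_pos]
    exact disc.map_source (by simp [disc])
  · simp [plane, hij, hij']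

theorem exists_disc_of_two_lt_card {S : Finset ι} (hS : 2 < S.card) (w : ι)
    {O : Set ({j // j ≠ w} → ℝ)} (hO : IsOpen O) {y : {j // j ≠ w} → ℝ} (hy : y ∈ O) :
    ∃ γ : ℂ → {j // j ≠ w} → ℝ, Continuous γ ∧ Function.Injective γ ∧ γ 0 = y ∧
      ∀ z, γ z ∈ O ∧ ∀ i : {j // j ≠ w}, (i : ι) ∉ S → γ z i = y i := by
  have : 1 < (S.erase w).card := by have := S.pred_card_le_card_erase (a := w); omega
  obtain ⟨j, hj, j', hj', hne⟩ := Finset.one_lt_card.1 this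
  obtain ⟨⟨hjw, hjS⟩, hjw', hjS'⟩ := Finset.mem_erase.1 hj, Finset.mem_erase.1 hj'
  have hne' : (⟨j, hjw⟩ : {j // j ≠ w}) ≠ ⟨j', hjw'⟩ := by simpa using hne
  obtain ⟨γ, γ_cont, γ_inj, γ_zero, hγ⟩ := exists_disc_of_mem_open hne' hO hy
  refine ⟨γ, γ_cont, γ_inj, γ_zero, fun z ↦ ⟨(hγ z).1, fun i hi ↦ (hγ z).2 i ?_ ?_⟩⟩
  · rintro rfl
    exact hi hjS
  · rintro rfl
    exact hi hjS'

variable [DecidableEq ι]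

/-- The sign `1` on the facets in `L`, which `facetShear` turns to face downwards, and `-1` on the
other ones, which it turns to face upwards. -/
noncomputable def facetSign (L : Finset (ι × ℤˣ)) (f : ι × ℤˣ) : ℝ := if f ∈ L then 1 else -1

/-- Half the width, at height `W`, of the sheared cube in the direction `i`; heights are clamped
to `[-1, 1]` to keep the width positive. -/
noncomputable def shearScale (L : Finset (ι × ℤˣ)) (i : ι) (W : ℝ) : ℝ :=
  2 + (facetSign L (i, 1) + facetSign L (i, -1)) / 2 * max (-1) (min W 1)

/-- The slope in the direction `i` of the axis of the sheared cube. -/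
noncomputable def shearSlope (L : Finset (ι × ℤˣ)) (i : ι) : ℝ :=
  (facetSign L (i, 1) - facetSign L (i, -1)) / 2

theorem facetSign_eq_one_or (L : Finset (ι × ℤˣ)) (f : ι × ℤˣ) :
    facetSign L f = 1 ∨ facetSign L f = -1 := by
  unfold facetSign
  split_ifs <;> simp

theorem shearScale_pos (L : Finset (ι × ℤˣ)) (i : ι) (W : ℝ) : 0 < shearScale L i W := by
  have h_low : -1 ≤ max (-1) (min W 1) := le_max_left _ _
  have h_high : max (-1) (min W 1) ≤ 1 := max_le (by norm_num) (min_le_right _ _)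
  unfold shearScale
  rcases facetSign_eq_one_or L (i, 1) with h | h <;>
    rcases facetSign_eq_one_or L (i, -1) with h' | h' <;> rw [h, h'] <;> linarith

theorem continuous_shearScale (L : Finset (ι × ℤˣ)) (i : ι) : Continuous (shearScale L i) := by
  unfold shearScale
  fun_prop

theorem facetSign_eq_scale_add_slope (L : Finset (ι × ℤˣ)) (i : ι) (ε : ℤˣ) {W : ℝ}
    (hW : |W| ≤ 1) : 2 + facetSign L (i, ε) * W = shearScale L i W + ε * shearSlope L i * W := by
  have : max (-1) (min W 1) = W := by
    rw [min_eq_left (abs_le.1 hW).2, max_eq_right (abs_le.1 hW).1]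
  unfold shearScale shearSlope
  rw [this]
  rcases Int.units_eq_one_or ε with rfl | rfl <;> push_cast <;> ring

/-- The homeomorphism which takes `-η u w` as the height and shears and scales the other directions
so that the facets in `L` become the lower graph, and the other facets the upper graph, bounding
the image of the cube. -/
noncomputable def facetShear (L : Finset (ι × ℤˣ)) (w : ι) (η : ℤˣ) :
    (ι → ℝ) ≃ₜ ({j // j ≠ w} → ℝ) × ℝ where
  toFun u :=
    (fun j ↦ shearScale L j (-η * u w) * u j + shearSlope L j * (-η * u w), -η * u w)
  invFun p i :=
    if h : i = w then -η * p.2 else (p.1 ⟨i, h⟩ - shearSlope L i * p.2) / shearScale L i p.2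
  left_inv u := by
    ext i
    rcases eq_or_ne i w with rfl | h
    · rcases Int.units_eq_one_or η with rfl | rfl <;> simp
    · simp [h, (shearScale_pos L i _).ne']
  right_inv p := by
    have h_sq : -(η : ℝ) * (-η * p.2) = p.2 := by
      rcases Int.units_eq_one_or η with rfl | rfl <;> simp
    refine Prod.ext (funext fun j ↦ ?_) (by simpa using h_sq)
    have := (shearScale_pos L j p.2).ne'
    simp only [dif_pos, dif_neg j.2, h_sq]
    rw [mul_div_cancel₀ _ this, sub_add_cancel]
  continuous_toFun := by
    have := continuous_shearScale L
    fun_prop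
  continuous_invFun := by
    refine continuous_pi fun i ↦ ?_
    rcases eq_or_ne i w with rfl | h
    · simp only [dif_pos]
      fun_prop
    · simp only [h, dif_neg, not_false_eq_true]
      exact Continuous.div (by fun_prop) ((continuous_shearScale L i).comp continuous_snd)
        fun p ↦ (shearScale_pos L i _).ne'

/-- The affine function of which, up to sign, the sheared facet `f` is a graph. -/
noncomputable def facetHeight (w : ι) (f : ι × ℤˣ) (y : {j // j ≠ w} → ℝ) : ℝ :=
  if h : f.1 = w then -1 else f.2 * y ⟨f.1, h⟩ - 2

theorem continuous_facetHeight (w : ι) (f : ι × ℤˣ) : Continuous (facetHeight w f) := by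
  unfold facetHeight
  split_ifs <;> fun_prop

variable {S : Finset ι} {L : Finset (ι × ℤˣ)} {w : ι} {η : ℤˣ} {u : ι → ℝ}

theorem sign_mul_height_sub_self (hw : (w, η) ∈ L) (hw' : (w, -η) ∉ L) (ε : ℤˣ) :
    facetSign L (w, ε) * (facetShear L w η u).2 - facetHeight w (w, ε) (facetShear L w η u).1 =
      1 - ε * u w := by
  have sign_eq : facetSign L (w, ε) = ε * η := by
    rcases Int.units_eq_one_or η with rfl | rfl <;>
    rcases Int.units_eq_one_or ε with rfl | rfl <;> simp_all [facetSign]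
  simp only [facetShear, Homeomorph.homeomorph_mk_coe, Equiv.coe_fn_mk, facetHeight, sign_eq,
    dif_pos]
  rcases Int.units_eq_one_or η with rfl | rfl <;> simp <;> ring

theorem exists_pos_sign_mul_height_sub (hw : (w, η) ∈ L) (hw' : (w, -η) ∉ L) (hu : |u w| ≤ 1)
    (f : ι × ℤˣ) : ∃ r > 0,
      facetSign L f * (facetShear L w η u).2 - facetHeight w f (facetShear L w η u).1 =
        r * (1 - f.2 * u f.1) := by
  obtain ⟨i, ε⟩ := f
  rcases eq_or_ne i w with rfl | hi
  · exact ⟨1, one_pos, (sign_mul_height_sub_self hw hw' ε).trans (one_mul _).symm⟩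
  · refine ⟨shearScale L i (-η * u w), shearScale_pos L i _, ?_⟩
    have hW : |-(η : ℝ) * u w| ≤ 1 := by
      rcases Int.units_eq_one_or η with rfl | rfl <;> simpa using hu
    have := facetSign_eq_scale_add_slope L i ε hW
    simp only [facetShear, Homeomorph.homeomorph_mk_coe, Equiv.coe_fn_mk, facetHeight, hi,
      dif_neg, not_false_eq_true]
    linear_combination this

theorem facetHeight_le_iff (hw : (w, η) ∈ L) (hw' : (w, -η) ∉ L) (hu : |u w| ≤ 1)
    (f : ι × ℤˣ) : facetHeight w f (facetShear L w η u).1 ≤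
      facetSign L f * (facetShear L w η u).2 ↔ f.2 * u f.1 ≤ 1 := by
  obtain ⟨r, r_pos, hr⟩ := exists_pos_sign_mul_height_sub hw hw' hu f
  rw [← sub_nonneg, hr, mul_nonneg_iff_of_pos_left r_pos, sub_nonneg]

theorem facetHeight_eq_iff (hw : (w, η) ∈ L) (hw' : (w, -η) ∉ L) (hu : |u w| ≤ 1)
    (f : ι × ℤˣ) : facetHeight w f (facetShear L w η u).1 =
      facetSign L f * (facetShear L w η u).2 ↔ u f.1 = f.2 := by
  obtain ⟨r, r_pos, hr⟩ := exists_pos_sign_mul_height_sub hw hw' hu f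
  rw [eq_comm, ← sub_eq_zero, hr, mul_eq_zero_iff_left r_pos.ne', sub_eq_zero, eq_comm,
    units_mul_eq_one_iff]

theorem facetShear_apply_eq_zero_iff (hL : L ⊆ cubeFacets S) {j : {j // j ≠ w}}
    (hj : (j : ι) ∉ S) : (facetShear L w η u).1 j = 0 ↔ u j = 0 := by
  have sign_eq (ε : ℤˣ) : facetSign L (j, ε) = -1 :=
    if_neg fun h ↦ hj (mem_cubeFacets.1 (hL h))
  have slope_eq : shearSlope L j = 0 := by simp [shearSlope, sign_eq]
  simp [facetShear, slope_eq, (shearScale_pos L j _).ne']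

theorem mem_unitCube_iff_facetHeight_le (hL : L ⊆ cubeFacets S) (hw : (w, η) ∈ L)
    (hw' : (w, -η) ∉ L) : u ∈ unitCube S ↔
      (∀ j : {j // j ≠ w}, (j : ι) ∉ S → (facetShear L w η u).1 j = 0) ∧
      ∀ f ∈ cubeFacets S, facetHeight w f (facetShear L w η u).1 ≤
        facetSign L f * (facetShear L w η u).2 := by
  have hwS : w ∈ S := mem_cubeFacets.1 (hL hw)
  have off_iff : (∀ j : {j // j ≠ w}, (j : ι) ∉ S → (facetShear L w η u).1 j = 0) ↔
      ∀ i ∉ S, u i = 0 := by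
    constructor
    · intro h i hi
      have hiw : i ≠ w := fun hiw ↦ hi (hiw ▸ hwS)
      exact (facetShear_apply_eq_zero_iff hL hi).1 (h ⟨i, hiw⟩ hi)
    · exact fun h j hj ↦ (facetShear_apply_eq_zero_iff hL hj).2 (h j hj)
  rw [off_iff, mem_unitCube_iff_forall_cubeFacets, and_comm]
  refine and_congr_right' ⟨fun h f hf ↦ ?_, fun h f hf ↦ ?_⟩
  · have hu : |u w| ≤ 1 :=
      abs_le_one_iff_forall_units.2 fun ε ↦ h (w, ε) (mem_cubeFacets.2 hwS)
    exact (facetHeight_le_iff hw hw' hu f).2 (h f hf)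
  · have hu : |u w| ≤ 1 := abs_le_one_iff_forall_units.2 fun ε ↦ by
      rw [← sub_nonneg, ← sign_mul_height_sub_self hw hw', sub_nonneg]
      exact h (w, ε) (mem_cubeFacets.2 hwS)
    exact (facetHeight_le_iff hw hw' hu f).1 (h f hf)

theorem eq_sup'_iff_exists_eq {κ : Type*} {T : Finset κ} (hT : T.Nonempty) {g : κ → ℝ} {W : ℝ}
    (hg : ∀ f ∈ T, g f ≤ W) : W = T.sup' hT g ↔ ∃ f ∈ T, g f = W := by
  constructor
  · rintro rfl
    obtain ⟨f, hf, h_eq⟩ := T.exists_mem_eq_sup' hT g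
    exact ⟨f, hf, h_eq.symm⟩
  · rintro ⟨f, hf, rfl⟩
    exact (T.le_sup' g hf).antisymm (T.sup'_le hT g hg)

theorem forall_cubeFacets_le_iff (hL : L ⊆ cubeFacets S) {g : ι × ℤˣ → ℝ} {W : ℝ} :
    (∀ f ∈ cubeFacets S, g f ≤ facetSign L f * W) ↔
      (∀ f ∈ L, g f ≤ W) ∧ ∀ f ∈ cubeFacets S \ L, g f ≤ -W := by
  conv_lhs => rw [← Finset.union_sdiff_of_subset hL]
  rw [Finset.forall_mem_union]
  refine and_congr (forall₂_congr fun f hf ↦ ?_) (forall₂_congr fun f hf ↦ ?_)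
  · rw [facetSign, if_pos hf, one_mul]
  · rw [facetSign, if_neg (Finset.mem_sdiff.1 hf).2, neg_one_mul]

/-- The upper envelope of the functions `facetHeight w f` with `f ∈ T`. -/
noncomputable def heightEnvelope (w : ι) (T : Finset (ι × ℤˣ)) (hT : T.Nonempty)
    (y : {j // j ≠ w} → ℝ) : ℝ :=
  T.sup' hT (facetHeight w · y)

theorem continuous_heightEnvelope (w : ι) {T : Finset (ι × ℤˣ)} (hT : T.Nonempty) :
    Continuous (heightEnvelope w T hT) :=
  Continuous.finset_sup'_apply hT fun f _ ↦ continuous_facetHeight w f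

theorem mem_unitCube_iff_mem_Icc (hL : L ⊆ cubeFacets S) (hw : (w, η) ∈ L) (hw' : (w, -η) ∉ L)
    (hL₀ : L.Nonempty) (hU₀ : (cubeFacets S \ L).Nonempty) : u ∈ unitCube S ↔
      (∀ j : {j // j ≠ w}, (j : ι) ∉ S → (facetShear L w η u).1 j = 0) ∧
      (facetShear L w η u).2 ∈ Icc (heightEnvelope w L hL₀ (facetShear L w η u).1)
        (-heightEnvelope w (cubeFacets S \ L) hU₀ (facetShear L w η u).1) := by
  rw [mem_unitCube_iff_facetHeight_le hL hw hw', forall_cubeFacets_le_iff hL, mem_Icc, le_neg,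
    heightEnvelope, heightEnvelope, Finset.sup'_le_iff, Finset.sup'_le_iff]

theorem mem_facetUnion_iff_sign_mul_eq (hL : L ⊆ cubeFacets S) (hw : (w, η) ∈ L)
    (hw' : (w, -η) ∉ L) (hu : u ∈ unitCube S) {T : Finset (ι × ℤˣ)} (hT₀ : T.Nonempty)
    (hT : T ⊆ cubeFacets S) {s : ℝ} (hs : ∀ f ∈ T, facetSign L f = s) : u ∈ facetUnion S T ↔
      s * (facetShear L w η u).2 = heightEnvelope w T hT₀ (facetShear L w η u).1 := by
  have huw : |u w| ≤ 1 := hu.1 w (mem_cubeFacets.1 (hL hw))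
  have height_le := ((mem_unitCube_iff_facetHeight_le hL hw hw').1 hu).2
  rw [facetUnion, mem_ofPred_eq, and_iff_right hu, heightEnvelope,
    eq_sup'_iff_exists_eq hT₀ fun f hf ↦ hs f hf ▸ height_le f (hT hf)]
  exact exists_congr fun f ↦ and_congr_right fun hf ↦ by
    rw [← hs f hf, facetHeight_eq_iff hw hw' huw]

theorem isClosed_forall_eq_zero {κ : Type*} (P : κ → Prop) :
    IsClosed {y : κ → ℝ | ∀ j, P j → y j = 0} := by
  simp only [ofPred_forall]
  exact isClosed_iInter fun j ↦ isClosed_iInter fun _ ↦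
    isClosed_eq (continuous_apply j) continuous_const

/-- `K` meets `unitCube S` in the facets in `L`, and `K'` arises from `K` by exchanging these for
the other facets; some facet in `L` lies opposite to a facet not in `L`. -/
structure IsFacetExchange (S : Finset ι) (L : Finset (ι × ℤˣ)) (K K' : Set (ι → ℝ)) : Prop where
  two_lt_card : 2 < S.card
  subset : L ⊆ cubeFacets S
  exists_opposite : ∃ w η, (w, η) ∈ L ∧ (w, -η) ∉ L
  inter_eq : K ∩ unitCube S = facetUnion S L
  inter_eq' : K' ∩ unitCube S = facetUnion S (cubeFacets S \ L)
  sdiff_eq : K \ unitCube S = K' \ unitCube S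

theorem IsFacetExchange.symm {K K' : Set (ι → ℝ)} (h : IsFacetExchange S L K K') :
    IsFacetExchange S (cubeFacets S \ L) K' K := by
  obtain ⟨w, η, hw, hw'⟩ := h.exists_opposite
  have hwS : w ∈ S := mem_cubeFacets.1 (h.subset hw)
  refine ⟨h.two_lt_card, Finset.sdiff_subset, ⟨w, -η, ?_, ?_⟩, h.inter_eq', ?_, h.sdiff_eq.symm⟩
  · exact Finset.mem_sdiff.2 ⟨mem_cubeFacets.2 hwS, hw'⟩
  · simp [hw]
  · rw [Finset.sdiff_sdiff_eq_self h.subset, h.inter_eq]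

theorem mem_image_iff_of_inter_eq {X Y : Type*} {Ψ : X → Y} (hΨ : Function.Injective Ψ)
    {M F A : Set X} (hM : M ∩ F = A) {u : X} (hu : u ∈ F) : Ψ u ∈ Ψ '' M ↔ u ∈ A := by
  rw [hΨ.mem_set_image, ← hM, mem_inter_iff, and_iff_left hu]

/- The cube is the region between two graphs after shearing: the facets in `L` form the lower one
and the other facets the upper one. -/
theorem IsFacetExchange.isotopicSets [Finite ι] {K K' : Set (ι → ℝ)}
    (h : IsFacetExchange S L K K') (hK : IsClosed K) (hKp : LocallyPlanar K) :
    IsotopicSets K K' := by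
  obtain ⟨hS, hL, ⟨w, η, hw, hw'⟩, hKL, hKL', hdiff⟩ := h
  have := Fintype.ofFinite ι
  have hwS : w ∈ S := mem_cubeFacets.1 (hL hw)
  have L_nonempty : L.Nonempty := ⟨_, hw⟩
  have U_nonempty : (cubeFacets S \ L).Nonempty :=
    ⟨_, Finset.mem_sdiff.2 ⟨mem_cubeFacets.2 hwS, hw'⟩⟩
  let Ψ := facetShear L w η
  let α := heightEnvelope w L L_nonempty
  let β (y : {j // j ≠ w} → ℝ) : ℝ := -heightEnvelope w (cubeFacets S \ L) U_nonempty y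
  let Z : Set ({j // j ≠ w} → ℝ) :=
    {y | (∀ j : {j // j ≠ w}, (j : ι) ∉ S → y j = 0) ∧ α y ≤ β y}
  have α_cont : Continuous α := continuous_heightEnvelope w L_nonempty
  have β_cont : Continuous β := (continuous_heightEnvelope w U_nonempty).neg
  have Z_closed : IsClosed Z := (isClosed_forall_eq_zero _).inter (isClosed_le α_cont β_cont)
  refine IsotopicSets.of_image Ψ (isotopicSets_of_graphs (Ψ.isClosedMap _ hK) (hKp.image Ψ) α_cont
    β_cont Z_closed (fun y hy hlt ↦ ?_) (fun y hy ↦ hy.2) (F := Ψ '' unitCube S)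
    (Ψ.surjective.forall.2 fun u ↦ ?_) (forall_mem_image.2 fun u hu ↦ ?_)
    (forall_mem_image.2 fun u hu ↦ ?_) ?_)
  · obtain ⟨κ, κ_cont, κ_inj, κ_zero, hκ⟩ :=
      exists_disc_of_two_lt_card hS w (isOpen_lt α_cont β_cont) hlt
    exact ⟨κ, κ_cont, κ_inj, κ_zero, fun z ↦
      ⟨fun i hi ↦ ((hκ z).2 i hi).trans (hy.1 i hi), le_of_lt (hκ z).1⟩⟩
  · rw [Ψ.injective.mem_set_image, mem_unitCube_iff_mem_Icc hL hw hw' L_nonempty U_nonempty]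
    exact ⟨fun ⟨h, h_Icc⟩ ↦ ⟨⟨h, h_Icc.1.trans h_Icc.2⟩, h_Icc⟩, fun ⟨h, h_Icc⟩ ↦ ⟨h.1, h_Icc⟩⟩
  · rw [mem_image_iff_of_inter_eq Ψ.injective hKL hu,
      mem_facetUnion_iff_sign_mul_eq hL hw hw' hu L_nonempty hL fun f hf ↦ if_pos hf, one_mul]
  · rw [mem_image_iff_of_inter_eq Ψ.injective hKL' hu,
      mem_facetUnion_iff_sign_mul_eq hL hw hw' hu U_nonempty Finset.sdiff_subset
        fun f hf ↦ if_neg (Finset.mem_sdiff.1 hf).2, neg_one_mul,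
      neg_eq_iff_eq_neg]
  · rw [← image_sdiff Ψ.injective, ← image_sdiff Ψ.injective, hdiff]

end UnitCube

section CubulationFaces

variable {n m : ℕ} {v v' : Fin n → ℤ} {S S' : Finset (Fin n)}

theorem sFace_eq_Icc (n m : ℕ) (v : Fin n → ℤ) (S : Finset (Fin n)) :
    sFace n m v S =
      Icc (fun i ↦ (v i : ℝ) / m) (fun i ↦ ((v i + if i ∈ S then 1 else 0 : ℤ) : ℝ) / m) := by
  ext x
  simp only [sFace, mem_ofPred_eq, mem_Icc, Pi.le_def, ← forall_and]
  refine forall_congr' fun i ↦ ?_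
  by_cases hi : i ∈ S <;> simp [hi, le_antisymm_iff, and_comm]

theorem sFace_subset_sFace_iff (hm : 0 < m) : sFace n m v' S' ⊆ sFace n m v S ↔
    ∀ i, v i ≤ v' i ∧
      (v' i + if i ∈ S' then 1 else 0) ≤ v i + if i ∈ S then 1 else 0 := by
  have hm' : (0 : ℝ) < m := Nat.cast_pos.2 hm
  have nonempty : (fun i ↦ (v' i : ℝ) / m) ≤
      fun i ↦ ((v' i + if i ∈ S' then 1 else 0 : ℤ) : ℝ) / m := fun i ↦ by
    refine (div_le_div_iff_of_pos_right hm').2 (Int.cast_le.2 ?_)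
    split_ifs <;> omega
  simp only [sFace_eq_Icc, Icc_subset_Icc_iff nonempty, Pi.le_def, ← forall_and,
    div_le_div_iff_of_pos_right hm', Int.cast_le]

theorem sFace_inj (hm : 0 < m) : sFace n m v' S' = sFace n m v S ↔ v' = v ∧ S' = S := by
  refine ⟨fun h ↦ ?_, fun ⟨hv, hS⟩ ↦ hv ▸ hS ▸ rfl⟩
  have h₁ := (sFace_subset_sFace_iff hm).1 h.subset
  have h₂ := (sFace_subset_sFace_iff hm).1 h.superset
  have hv : v' = v := funext fun i ↦ (h₂ i).1.antisymm (h₁ i).1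
  refine ⟨hv, Finset.ext fun i ↦ ?_⟩
  have h₁ := (h₁ i).2
  have h₂ := (h₂ i).2
  rw [hv] at h₁ h₂
  split_ifs at h₁ h₂ <;> first | omega | simp_all

/-- The facet of the cube `sFace n m v S` orthogonal to the axis `f.1`, on the side given by the
sign `f.2`. -/
def cubeFace (m : ℕ) (v : Fin n → ℤ) (S : Finset (Fin n)) (f : Fin n × ℤˣ) : Set (Fin n → ℝ) :=
  sFace n m (Function.update v f.1 (v f.1 + if f.2 = 1 then 1 else 0)) (S.erase f.1)

theorem cubeFace_subset_sFace (hm : 0 < m) (v : Fin n → ℤ) {f : Fin n × ℤˣ}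
    (hf : f ∈ cubeFacets S) : cubeFace m v S f ⊆ sFace n m v S := by
  obtain ⟨i, ε⟩ := f
  have hi : i ∈ S := mem_cubeFacets.1 hf
  refine (sFace_subset_sFace_iff hm).2 fun j ↦ ?_
  rcases eq_or_ne j i with rfl | hj
  · simp only [Function.update_self, Finset.notMem_erase, if_false, hi, if_true]
    split_ifs <;> omega
  · simp [hj]

theorem injOn_cubeFace (hm : 0 < m) (v : Fin n → ℤ) (S : Finset (Fin n)) :
    InjOn (cubeFace m v S) (cubeFacets S) := by
  rintro ⟨i, ε⟩ hi ⟨j, δ⟩ hj h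
  obtain ⟨h_update, h_erase⟩ := (sFace_inj hm).1 h
  obtain rfl : i = j := (Finset.erase_inj S (mem_cubeFacets.1 hi)).1 h_erase
  have h_level := congrFun h_update i
  rcases Int.units_eq_one_or ε with rfl | rfl <;> rcases Int.units_eq_one_or δ with rfl | rfl <;>
    simp_all

theorem faces_subset_eq_image_cubeFace (hm : 0 < m) (v : Fin n → ℤ) {k : ℕ} (hS : S.card = k + 1) :
    {G ∈ sFaces n m k | G ⊆ sFace n m v S} = cubeFace m v S '' cubeFacets S := by
  ext G
  constructor
  · rintro ⟨⟨v', S', hS', rfl⟩, hsub⟩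
    have h := (sFace_subset_sFace_iff hm).1 hsub
    have hSS : S' ⊆ S := fun i hi ↦ by
      by_contra hiS
      have := h i
      simp only [hi, hiS, if_true, if_false] at this
      omega
    obtain ⟨i, hiS', rfl⟩ := Finset.exists_eq_insert_iff.2 ⟨hSS, hS'.symm ▸ hS.symm⟩
    refine ⟨(i, if v' i = v i then -1 else 1), mem_cubeFacets.2 (Finset.mem_insert_self i S'), ?_⟩
    refine (sFace_inj hm).2 ⟨?_, Finset.erase_insert hiS'⟩
    ext j
    have h_j := h j
    rcases eq_or_ne j i with rfl | hj
    · rw [Function.update_self]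
      simp only [hiS', Finset.mem_insert_self, if_true, if_false] at h_j
      by_cases h_level : v' j = v j
      · simp [h_level]
      · simp only [h_level, if_false, if_true]
        omega
    · rw [Function.update_of_ne hj]
      simp only [Finset.mem_insert, hj, false_or] at h_j
      omega
  · rintro ⟨f, hf, rfl⟩
    exact ⟨⟨_, _, by rw [Finset.card_erase_of_mem (mem_cubeFacets.1 hf), hS,
      Nat.add_sub_cancel], rfl⟩, cubeFace_subset_sFace hm v hf⟩

/-- The affine homeomorphism which takes the cube `sFace n m v S` to `unitCube S`. -/
noncomputable def cubeChart (hm : 0 < m) (v : Fin n → ℤ) (S : Finset (Fin n)) :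
    (Fin n → ℝ) ≃ₜ (Fin n → ℝ) where
  toFun x i := 2 * (m * x i - v i) - if i ∈ S then 1 else 0
  invFun u i := ((u i + if i ∈ S then 1 else 0) / 2 + v i) / m
  left_inv x := by
    ext i
    have : (m : ℝ) ≠ 0 := (Nat.cast_pos.2 hm).ne'
    field_simp
    ring
  right_inv u := by
    ext i
    have : (m : ℝ) ≠ 0 := (Nat.cast_pos.2 hm).ne'
    field_simp
    ring
  continuous_toFun := by fun_prop
  continuous_invFun := by fun_prop

theorem cubeChart_mem_unitCube_iff (hm : 0 < m) {x : Fin n → ℝ} :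
    cubeChart hm v S x ∈ unitCube S ↔ x ∈ sFace n m v S := by
  have hm' : (0 : ℝ) < m := Nat.cast_pos.2 hm
  simp only [unitCube, sFace, mem_ofPred_eq, ← forall_and]
  refine forall_congr' fun i ↦ ?_
  simp only [cubeChart, Homeomorph.homeomorph_mk_coe, Equiv.coe_fn_mk]
  by_cases hi : i ∈ S
  · simp only [hi, if_true, forall_const, not_true_eq_false, false_imp_iff, and_true, abs_le,
      div_le_iff₀' hm', le_div_iff₀' hm']
    constructor <;> rintro ⟨h, h'⟩ <;> constructor <;> linarith
  · simp [hi, eq_div_iff_mul_eq hm'.ne', sub_eq_zero, mul_comm]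

theorem cubeChart_eq_units_iff (hm : 0 < m) {x : Fin n → ℝ} {i : Fin n} (hi : i ∈ S) (ε : ℤˣ) :
    cubeChart hm v S x i = ε ↔ x i = ((v i + if ε = 1 then 1 else 0 : ℤ) : ℝ) / m := by
  have hm' : (m : ℝ) ≠ 0 := (Nat.cast_pos.2 hm).ne'
  have level_eq : (2 * if ε = 1 then 1 else 0 : ℝ) - 1 = ε := by
    rcases Int.units_eq_one_or ε with rfl | rfl <;> norm_num
  simp only [cubeChart, Homeomorph.homeomorph_mk_coe, Equiv.coe_fn_mk, hi, if_true,
    eq_div_iff_mul_eq hm', ← level_eq, Int.cast_add, Int.cast_ite, Int.cast_one, Int.cast_zero]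
  constructor <;> intro h <;> linarith

theorem mem_cubeFace_iff (hm : 0 < m) {f : Fin n × ℤˣ} (hf : f ∈ cubeFacets S) {x : Fin n → ℝ} :
    x ∈ cubeFace m v S f ↔ cubeChart hm v S x ∈ unitCube S ∧ cubeChart hm v S x f.1 = f.2 := by
  obtain ⟨i, ε⟩ := f
  have hi : i ∈ S := mem_cubeFacets.1 hf
  rw [cubeChart_mem_unitCube_iff, cubeChart_eq_units_iff hm hi]
  constructor
  · intro hx
    have hxi : x i = ((v i + if ε = 1 then 1 else 0 : ℤ) : ℝ) / m := by
      simpa using (hx i).2 (Finset.notMem_erase i S)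
    exact ⟨cubeFace_subset_sFace hm v hf hx, hxi⟩
  · rintro ⟨hx, hxi⟩ j
    rcases eq_or_ne j i with rfl | hj
    · simpa using hxi
    · simpa [hj] using hx j

theorem preimage_facetUnion (hm : 0 < m) {L : Finset (Fin n × ℤˣ)} (hL : L ⊆ cubeFacets S) :
    cubeChart hm v S ⁻¹' facetUnion S L = ⋃₀ (cubeFace m v S '' L) := by
  ext x
  simp only [facetUnion, mem_preimage, mem_ofPred_eq, sUnion_image, mem_iUnion, exists_prop]
  rw [← exists_and_left]
  refine exists_congr fun f ↦ ?_
  rw [and_left_comm]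
  exact and_congr_right fun hf ↦ (mem_cubeFace_iff hm (hL hf)).symm

end CubulationFaces

section FaceMoves

theorem isPreconnected_of_homeomorph_disk2 {X : Type*} [TopologicalSpace X] {A : Set X}
    (e : A ≃ₜ Disk2) : IsPreconnected A := by
  have : PreconnectedSpace Disk2 :=
    Subtype.preconnectedSpace (convex_closedBall _ _).isPreconnected
  have h := isPreconnected_range (continuous_subtype_val.comp e.symm.continuous)
  rwa [e.symm.surjective.range_comp, Subtype.range_coe] at h

theorem fst_eq_of_card_le_three {ι : Type*} {L : Finset (ι × ℤˣ)} (hcard : L.card ≤ 3)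
    (hneg : ∀ i ε, (i, ε) ∈ L → (i, -ε) ∈ L) {f g : ι × ℤˣ} (hf : f ∈ L) (hg : g ∈ L) :
    g.1 = f.1 := by
  by_contra hne
  have both_mem {i : ι} {ε : ℤˣ} (hi : (i, ε) ∈ L) (δ : ℤˣ) : (i, δ) ∈ L := by
    rcases eq_or_ne δ ε with rfl | h
    · exact hi
    · exact Int.units_ne_iff_eq_neg.1 h ▸ hneg i ε hi
  have h_sub : ({g.1, f.1} ×ˢ Finset.univ : Finset (ι × ℤˣ)) ⊆ L := by
    rintro ⟨i, δ⟩ hi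
    obtain rfl | rfl : i = g.1 ∨ i = f.1 := by simpa using (Finset.mem_product.1 hi).1
    exacts [both_mem hg δ, both_mem hf δ]
  have := Finset.card_le_card h_sub
  rw [Finset.card_product, Finset.card_pair hne, Finset.card_univ, Fintype.card_units_int] at this
  omega

/- If `L` contained the opposite of each of its facets, then it would be one opposite pair, whose
union is not connected. -/
theorem exists_mem_opposite_notMem {ι : Type*} {S : Finset ι} {L : Finset (ι × ℤˣ)}
    (hL : L ⊆ cubeFacets S) (hne : L.Nonempty) (hcard : L.card ≤ 3)
    (hconn : IsPreconnected (facetUnion S L)) : ∃ w η, (w, η) ∈ L ∧ (w, -η) ∉ L := by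
  by_contra! hneg
  obtain ⟨⟨i, ε⟩, hiL⟩ := hne
  have hi : i ∈ S := mem_cubeFacets.1 (hL hiL)
  have coord_eq (u : ι → ℝ) (hu : u ∈ facetUnion S L) : |u i| = 1 := by
    obtain ⟨-, f, hf, huf⟩ := hu
    have hfi : f.1 = i := fst_eq_of_card_le_three hcard hneg hiL hf
    rw [← hfi, huf]
    rcases Int.units_eq_one_or f.2 with h | h <;> simp [h]
  have units_mem (δ : ℤˣ) (hδ : (i, δ) ∈ L) : (δ : ℝ) ∈ (· i) '' facetUnion S L := by
    refine ⟨Pi.single i (δ : ℝ), ⟨⟨fun j _ ↦ ?_, fun j hj ↦ ?_⟩, (i, δ), hδ, by simp⟩, by simp⟩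
    · rcases Int.units_eq_one_or δ with rfl | rfl <;>
        rcases eq_or_ne j i with rfl | hji <;> simp [*]
    · exact Pi.single_eq_of_ne (ne_of_mem_of_not_mem hi hj).symm _
  have image_ordConnected : OrdConnected ((· i) '' facetUnion S L) :=
    (hconn.image (· i) (by fun_prop)).ordConnected
  obtain ⟨u, hu, hu_zero⟩ : (0 : ℝ) ∈ (· i) '' facetUnion S L := by
    refine image_ordConnected.uIcc_subset (units_mem ε hiL) (units_mem (-ε) (hneg i ε hiL)) ?_
    rcases Int.units_eq_one_or ε with rfl | rfl <;> simp
  have := coord_eq u hu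
  simp only [show u i = 0 from hu_zero, abs_zero, zero_ne_one] at this

theorem exchange_inter_and_sdiff {X : Type*} {K F A B : Set X} (hA : K ∩ F = A) (hB : B ⊆ F) :
    ((K \ A) ∪ B) ∩ F = B ∧ ((K \ A) ∪ B) \ F = K \ F := by
  subst hA
  constructor <;> ext x <;> have := @hB x <;>
    simp only [mem_inter_iff, mem_union, Set.mem_sdiff] <;> tauto

theorem M2Move.exists_isFacetExchange {K K' : Set (Fin 4 → ℝ)} (h : M2Move K K') :
    ∃ (Φ : (Fin 4 → ℝ) ≃ₜ (Fin 4 → ℝ)) (S : Finset (Fin 4)) (L : Finset (Fin 4 × ℤˣ)),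
      IsFacetExchange S L (Φ '' K) (Φ '' K') := by
  obtain ⟨m, hm, _, ⟨v, S, hS, rfl⟩, 𝒜, h𝒜, hne, hcard, hKF, ⟨e⟩, rfl⟩ := h
  rw [faces_subset_eq_image_cubeFace hm v hS] at h𝒜 ⊢
  obtain ⟨L, hL, rfl⟩ := subset_image_iff.1 h𝒜
  lift L to Finset (Fin 4 × ℤˣ) using toFinite L
  have face_inj : InjOn (cubeFace m v S) (cubeFacets S) := injOn_cubeFace hm v S
  rw [← face_inj.image_sdiff_subset hL, ← Finset.coe_sdiff]
  replace hL : L ⊆ cubeFacets S := Finset.coe_subset.1 hL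
  rw [(face_inj.mono (Finset.coe_subset.2 hL)).ncard_image, ncard_coe_finset] at hcard
  let Φ := cubeChart hm v S
  have image_union {M : Finset (Fin 4 × ℤˣ)} (hM : M ⊆ cubeFacets S) :
      Φ '' ⋃₀ (cubeFace m v S '' M) = facetUnion S M := by
    rw [← preimage_facetUnion hm hM, image_preimage_eq _ Φ.surjective]
  have image_cube : Φ '' sFace 4 m v S = unitCube S := by
    rw [← image_preimage_eq (unitCube S) Φ.surjective]
    exact congrArg _ (ext fun x ↦ (cubeChart_mem_unitCube_iff hm).symm)
  have faces_sub : ⋃₀ (cubeFace m v S '' ↑(cubeFacets S \ L)) ⊆ sFace 4 m v S :=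
    sUnion_subset (forall_mem_image.2 fun f hf ↦
      cubeFace_subset_sFace hm v (Finset.sdiff_subset (Finset.mem_coe.1 hf)))
  obtain ⟨inter_eq, sdiff_eq⟩ := exchange_inter_and_sdiff hKF faces_sub
  have connected : IsPreconnected (facetUnion S L) :=
    image_union hL ▸ (isPreconnected_of_homeomorph_disk2 e).image Φ Φ.continuous.continuousOn
  refine ⟨Φ, S, L, hS ▸ Nat.lt_succ_self 2, hL,
    exists_mem_opposite_notMem hL (Finset.coe_nonempty.1 hne.of_image) hcard connected, ?_, ?_, ?_⟩
  · rw [← image_cube, ← image_inter Φ.injective, hKF, image_union hL]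
  · rw [← image_cube, ← image_inter Φ.injective, inter_eq, image_union Finset.sdiff_subset]
  · rw [← image_cube, ← image_sdiff Φ.injective, ← image_sdiff Φ.injective, sdiff_eq]

theorem IsotopicSets.of_m2Move_or {K K' : Set (Fin 4 → ℝ)} (hK : IsClosed K)
    (hKp : LocallyPlanar K) (h : M2Move K K' ∨ M2Move K' K) : IsotopicSets K K' := by
  obtain ⟨Φ, S, L, hΦ⟩ : ∃ (Φ : (Fin 4 → ℝ) ≃ₜ (Fin 4 → ℝ)) (S : Finset (Fin 4))
      (L : Finset (Fin 4 × ℤˣ)), IsFacetExchange S L (Φ '' K) (Φ '' K') := by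
    rcases h with h | h
    · exact h.exists_isFacetExchange
    · obtain ⟨Φ, S, L, hΦ⟩ := h.exists_isFacetExchange
      exact ⟨Φ, S, _, hΦ.symm⟩
  exact .of_image Φ (hΦ.isotopicSets (Φ.isClosedMap K hK) (hKp.image Φ))

end FaceMoves

theorem cubulated_equiv_implies_isotopic_general {K₁ K₂ : Set (Fin 4 → ℝ)} (hc : IsClosed K₁)
    (hp : LocallyPlanar K₁) (h : CubulatedEquiv K₁ K₂) : AmbientIsotopic K₁ K₂ := by
  rw [ambientIsotopic_iff_isotopicSets]
  induction h with
  | refl => exact .refl K₁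
  | tail _ move ih => exact ih.trans (.of_m2Move_or (ih.isClosed hc) (ih.locallyPlanar hp) move)

/-- If two cubical 2-knots in ℝ⁴ are equivalent by a finite sequence of
cubulated moves, then they are ambient isotopic in ℝ⁴. -/
theorem cubulated_equiv_implies_isotopic (K₁ K₂ : Set (Fin 4 → ℝ))
    (h₁ : IsCubical2Knot K₁) (h₂ : IsCubical2Knot K₂)
    (h : CubulatedEquiv K₁ K₂) :
    AmbientIsotopic K₁ K₂ := by
  obtain ⟨⟨e⟩, -⟩ := h₁
  have : CompactSpace Sphere2 := isCompact_iff_compactSpace.1 (isCompact_sphere 0 1)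
  have closed : IsClosed K₁ := (isCompact_iff_compactSpace.2 e.symm.compactSpace).isClosed
  exact cubulated_equiv_implies_isotopic_general closed
    (locallyPlanar_sphere2.of_injective e.continuous e.injective) h
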